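/- For all h, i, j ∈ {0,1,…,d}: if h < i, then A_h G_{ij} = (E_i* A_h E_i*) G_{ij}; and if h < j, then G_{ij} A_h = G_{ij} (E_j* A_h E_j*). -/

import Mathlib

open Finset Matrix

/-- Vertex set of the wreath product `K_{n 0} ≀ K_{n 1} ≀ ⋯ ≀ K_{n (d-1)}`
(paper indices `n_1, …, n_d` correspond to `n 0, …, n (d-1)`). -/
abbrev Vx (d : ℕ) (n : ℕ → ℕ) : Type := (i : Fin d) → Fin (n i)

/-- `delta x y = 0` if `x = y`; otherwise `delta x y` is the largest (1-based)
index at which `x` and `y` differ. -/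
def delta {d : ℕ} {n : ℕ → ℕ} (x y : Vx d n) : ℕ :=
  (Finset.univ.filter fun i => x i ≠ y i).sup fun i => (i : ℕ) + 1

/-- The `i`-th adjacency matrix of the wreath product: `(A i) x y = 1` iff `delta x y = i`. -/
noncomputable def A (d : ℕ) (n : ℕ → ℕ) (i : ℕ) : Matrix (Vx d n) (Vx d n) ℂ :=
  Matrix.of fun x y => if delta x y = i then 1 else 0

/-- The valencies: `k 0 = 1` and, for `1 ≤ i`, `k i = n_1 ⋯ n_{i-1} (n_i - 1)`,
i.e. `k i = n 0 ⋯ n (i-2) * (n (i-1) - 1)`. -/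
def k (n : ℕ → ℕ) (i : ℕ) : ℕ :=
  if i = 0 then 1 else (∏ j ∈ Finset.range (i - 1), n j) * (n (i - 1) - 1)

/-- The dual idempotent `E_i*` with respect to the base point `x₀`: the diagonal
0-1 matrix with `(E_i*)_{yy} = 1` iff `delta x₀ y = i`. -/
noncomputable def Es {d : ℕ} {n : ℕ → ℕ} (x₀ : Vx d n) (i : ℕ) :
    Matrix (Vx d n) (Vx d n) ℂ :=
  Matrix.of fun y z => if y = z ∧ delta x₀ y = i then 1 else 0

/-- The all-ones matrix `J`. -/
noncomputable def Jm (d : ℕ) (n : ℕ → ℕ) : Matrix (Vx d n) (Vx d n) ℂ :=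
  Matrix.of fun _ _ => 1

/-- The matrices `G i j`. -/
noncomputable def G {d : ℕ} {n : ℕ → ℕ} (x₀ : Vx d n) (i j : ℕ) :
    Matrix (Vx d n) (Vx d n) ℂ :=
  if i < j then ((k n j : ℂ))⁻¹ • (Es x₀ i * A d n j * Es x₀ j)
  else if j < i then ((k n j : ℂ))⁻¹ • (Es x₀ i * A d n i * Es x₀ j)
  else ((k n i : ℂ))⁻¹ • (Es x₀ i * Jm d n * Es x₀ i)

/-- The span `U` of the matrices `G i j`, `i, j ∈ [d]`. -/
noncomputable def Uspan {d : ℕ} {n : ℕ → ℕ} (x₀ : Vx d n) :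
    Submodule ℂ (Matrix (Vx d n) (Vx d n) ℂ) :=
  Submodule.span ℂ (Set.range fun p : Fin (d + 1) × Fin (d + 1) => G x₀ p.1 p.2)

/-- The Terwilliger algebra of the wreath product with respect to `x₀`. -/
noncomputable def Ter {d : ℕ} {n : ℕ → ℕ} (x₀ : Vx d n) :
    Subalgebra ℂ (Matrix (Vx d n) (Vx d n) ℂ) :=
  Algebra.adjoin ℂ
    ((Set.range fun i : Fin (d + 1) => A d n i) ∪ (Set.range fun i : Fin (d + 1) => Es x₀ i))

/-- The matrices `F i h`, for `1 ≤ i ≤ d` and `0 ≤ h ≤ i - 1`. -/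
noncomputable def F {d : ℕ} {n : ℕ → ℕ} (x₀ : Vx d n) (i h : ℕ) :
    Matrix (Vx d n) (Vx d n) ℂ :=
  if h < i - 1 then
    (∑ j ∈ Finset.range (h + 1), (k n j : ℂ))⁻¹ •
        (∑ j ∈ Finset.range (h + 1), Es x₀ i * A d n j * Es x₀ i)
      - (∑ j ∈ Finset.range (h + 2), (k n j : ℂ))⁻¹ •
          (∑ j ∈ Finset.range (h + 2), Es x₀ i * A d n j * Es x₀ i)
  else
    (∑ j ∈ Finset.range i, (k n j : ℂ))⁻¹ •
        (∑ j ∈ Finset.range i, Es x₀ i * A d n j * Es x₀ i)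
      - G x₀ i i

/-!
The function `delta` is an ultrametric, so two vertices at distance less than `i` from each other
are either both at distance `i` from `x₀` or both not. Hence `A_h` commutes with the idempotent
`E_i*` whenever `h < i`. As `E_i*` fixes `G_{ij}` from the left and `E_j*` fixes it from the right,
these idempotents can be inserted and moved past `A_h`.
-/

section Semigroup

variable {S : Type*} [Semigroup S] {a e g : S}

theorem mul_eq_corner_mul_of_commute (hea : Commute e a) (heg : e * g = g) :
    a * g = e * a * e * g :=
  calc
    a * g = a * (e * g) := by rw [heg]
    _ = e * a * g := by rw [← mul_assoc, hea.eq]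
    _ = e * a * e * g := by rw [mul_assoc _ e, heg]

theorem mul_eq_mul_corner_of_commute (hea : Commute e a) (hge : g * e = g) :
    g * a = g * (e * a * e) :=
  calc
    g * a = g * e * a := by rw [hge]
    _ = g * (a * e) := by rw [mul_assoc, hea.eq]
    _ = g * (e * a * e) := by rw [mul_assoc e, ← mul_assoc g e, hge]

end Semigroup

theorem commute_diagonal_of_apply_ne_zero {X R : Type*} [Fintype X] [DecidableEq X]
    [CommSemiring R] {f : X → R} {M : Matrix X X R} (hM : ∀ x y, M x y ≠ 0 → f x = f y) :
    Commute (diagonal f) M := by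
  ext x y
  rw [diagonal_mul, mul_diagonal, mul_comm]
  by_cases hxy : M x y = 0
  · rw [hxy, zero_mul, zero_mul]
  · rw [hM x y hxy]

section WreathProduct

variable {d : ℕ} {n : ℕ → ℕ}

theorem delta_comm (x y : Vx d n) : delta x y = delta y x := by
  simp only [delta, ne_comm]

theorem delta_le_iff {x y : Vx d n} {m : ℕ} :
    delta x y ≤ m ↔ ∀ i : Fin d, m ≤ i → x i = y i := by
  simp only [delta, Finset.sup_le_iff, mem_filter, mem_univ, true_and, Nat.succ_le_iff]
  exact forall_congr' fun i => by rw [← not_lt, not_imp_comm]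

theorem delta_le_max (x y z : Vx d n) : delta x z ≤ max (delta x y) (delta y z) :=
  delta_le_iff.2 fun i hi =>
    (delta_le_iff.1 (le_max_left _ _) i hi).trans (delta_le_iff.1 (le_max_right _ _) i hi)

theorem delta_eq_iff_of_delta_lt (x₀ : Vx d n) {x y : Vx d n} {i : ℕ} (hxy : delta x y < i) :
    delta x₀ x = i ↔ delta x₀ y = i := by
  have hy := delta_le_max x₀ x y
  have hx := delta_le_max x₀ y x
  rw [delta_comm y x] at hx
  omega

theorem Es_eq_diagonal (x₀ : Vx d n) (i : ℕ) :
    Es x₀ i = diagonal fun y => if delta x₀ y = i then 1 else 0 := by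
  ext y z
  simp only [Es, of_apply, diagonal_apply, ite_and]

theorem isIdempotentElem_Es (x₀ : Vx d n) (i : ℕ) : IsIdempotentElem (Es x₀ i) := by
  simp [IsIdempotentElem, Es_eq_diagonal]

theorem commute_Es_A (x₀ : Vx d n) {h i : ℕ} (hhi : h < i) : Commute (Es x₀ i) (A d n h) := by
  rw [Es_eq_diagonal]
  refine commute_diagonal_of_apply_ne_zero fun x y hxy => ?_
  have hdelta : delta x y = h := by simpa [A] using hxy
  simp only [delta_eq_iff_of_delta_lt x₀ (hdelta.trans_lt hhi)]

theorem exists_G_eq_Es_mul_mul_Es (x₀ : Vx d n) (i j : ℕ) :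
    ∃ M, G x₀ i j = Es x₀ i * M * Es x₀ j := by
  rcases lt_trichotomy i j with hij | rfl | hji
  · exact ⟨(k n j : ℂ)⁻¹ • A d n j, by simp [G, hij]⟩
  · exact ⟨(k n i : ℂ)⁻¹ • Jm d n, by simp [G]⟩
  · exact ⟨(k n j : ℂ)⁻¹ • A d n i, by simp [G, hji, hji.not_gt]⟩

theorem Es_mul_G (x₀ : Vx d n) (i j : ℕ) : Es x₀ i * G x₀ i j = G x₀ i j := by
  obtain ⟨M, hM⟩ := exists_G_eq_Es_mul_mul_Es x₀ i j
  rw [hM, ← mul_assoc, ← mul_assoc, (isIdempotentElem_Es x₀ i).eq]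

theorem G_mul_Es (x₀ : Vx d n) (i j : ℕ) : G x₀ i j * Es x₀ j = G x₀ i j := by
  obtain ⟨M, hM⟩ := exists_G_eq_Es_mul_mul_Es x₀ i j
  rw [hM, mul_assoc, (isIdempotentElem_Es x₀ j).eq]

end WreathProduct

/-- if `h < i` then `A h * G i j = (E_i* A_h E_i*) G i j`; and if `h < j`
then `G i j * A h = G i j (E_j* A_h E_j*)`. -/
theorem stmt16 (d : ℕ) (hd : 1 ≤ d) (n : ℕ → ℕ) (hn : ∀ i < d, 2 ≤ n i)
    (x₀ : Vx d n) (h i j : ℕ) (hi : i ≤ d) (hj : j ≤ d) (hhd : h ≤ d) :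
    (h < i → A d n h * G x₀ i j = Es x₀ i * A d n h * Es x₀ i * G x₀ i j) ∧
    (h < j → G x₀ i j * A d n h = G x₀ i j * (Es x₀ j * A d n h * Es x₀ j)) :=
  ⟨fun hhi => mul_eq_corner_mul_of_commute (commute_Es_A x₀ hhi) (Es_mul_G x₀ i j),
    fun hhj => mul_eq_mul_corner_of_commute (commute_Es_A x₀ hhj) (G_mul_Es x₀ i j)⟩
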